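/- Let (h_n, u_n, f_n) be a contradiction sequence. Then: (i) ‖h_n∇u_n‖²_{L²} − 1 = o(h_n) as n → ∞ (i.e. the semiclassical Dirichlet energy differs from ‖u_n‖²_{L²} = 1 by o(h_n)); and (ii) ∫_{ℝ^d} a(x)·‖h_n∇u_n(x)‖² dx = o(h_n²) as n → ∞. -/

import Mathlib

open MeasureTheory Complex ComplexConjugate

noncomputable section

/-- Partial derivative `∂u/∂xᵢ` of a complex-valued function on `ℝ^d`. -/
def pd {d : ℕ} (i : Fin d) (u : EuclideanSpace ℝ (Fin d) → ℂ)
    (x : EuclideanSpace ℝ (Fin d)) : ℂ :=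
  fderiv ℝ u x (EuclideanSpace.single i (1 : ℝ))

/-- Laplacian `Δu = ∑ᵢ ∂²u/∂xᵢ²` of a complex-valued function on `ℝ^d`. -/
def lap {d : ℕ} (u : EuclideanSpace ℝ (Fin d) → ℂ)
    (x : EuclideanSpace ℝ (Fin d)) : ℂ :=
  ∑ i : Fin d, pd i (pd i u) x

/-- The semiclassical Kelvin–Voigt operator
`P_h u = -h²Δu - u - i h (∇a·∇u + a Δu)`. -/
def Ph {d : ℕ} (h : ℝ) (a : EuclideanSpace ℝ (Fin d) → ℝ)
    (u : EuclideanSpace ℝ (Fin d) → ℂ) (x : EuclideanSpace ℝ (Fin d)) : ℂ :=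
  -(h ^ 2 : ℂ) * lap u x - u x -
    Complex.I * (h : ℂ) *
      ((∑ i : Fin d, (fderiv ℝ a x (EuclideanSpace.single i (1 : ℝ)) : ℂ) * pd i u x) +
        (a x : ℂ) * lap u x)

open Filter Asymptotics

/-!
Testing `P_h u` against `conj u` and integrating by parts gives
`⟨P_h u, u⟩ = (‖h∇u‖² - ‖u‖²) + i h ∫ a ‖∇u‖²`.
By Cauchy–Schwarz, the real and imaginary parts are both at most `‖u‖ ‖P_h u‖ = o(h)`; multiplying
the bound on the imaginary part by `h` turns it into the `o(h²)` bound on the damped energy.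
-/

theorem norm_integral_mul_le_sqrt_mul_sqrt {α 𝔸 : Type*} [MeasurableSpace α] {μ : Measure α}
    [NonUnitalNormedRing 𝔸] [NormedSpace ℝ 𝔸] {f g : α → 𝔸} (hf : MemLp f 2 μ)
    (hg : MemLp g 2 μ) :
    ‖∫ x, f x * g x ∂μ‖ ≤ √(∫ x, ‖f x‖ ^ 2 ∂μ) * √(∫ x, ‖g x‖ ^ 2 ∂μ) := by
  have hholder : ∫ x, ‖f x‖ * ‖g x‖ ∂μ ≤ √(∫ x, ‖f x‖ ^ 2 ∂μ) * √(∫ x, ‖g x‖ ^ 2 ∂μ) := by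
    simpa only [Real.rpow_two, ← Real.sqrt_eq_rpow] using
      integral_mul_norm_le_Lp_mul_Lq Real.HolderConjugate.two_two
        (by simpa using hf) (by simpa using hg)
  have hprod : Integrable (fun x => ‖f x‖ * ‖g x‖) μ := hf.norm.integrable_mul hg.norm
  calc ‖∫ x, f x * g x ∂μ‖ ≤ ∫ x, ‖f x‖ * ‖g x‖ ∂μ :=
        norm_integral_le_of_norm_le hprod (.of_forall fun x => norm_mul_le _ _)
    _ ≤ √(∫ x, ‖f x‖ ^ 2 ∂μ) * √(∫ x, ‖g x‖ ^ 2 ∂μ) := hholder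

theorem integral_mul_fderiv_eq_neg_of_hasCompactSupport {E 𝔸 : Type*} [NormedAddCommGroup E]
    [NormedSpace ℝ E] [FiniteDimensional ℝ E] [MeasurableSpace E] [BorelSpace E]
    {μ : Measure E} [μ.IsAddHaarMeasure] [NormedRing 𝔸] [NormedAlgebra ℝ 𝔸] {f g : E → 𝔸}
    (hf : ContDiff ℝ 1 f) (hg : ContDiff ℝ 1 g) (hsupp : HasCompactSupport f) (v : E) :
    ∫ x, f x * fderiv ℝ g x v ∂μ = -∫ x, fderiv ℝ f x v * g x ∂μ := by
  have hf' : Continuous (fun x => fderiv ℝ f x v) :=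
    (hf.continuous_fderiv one_ne_zero).clm_apply continuous_const
  have hg' : Continuous (fun x => fderiv ℝ g x v) :=
    (hg.continuous_fderiv one_ne_zero).clm_apply continuous_const
  exact integral_bilinear_fderiv_right_eq_neg_left_of_integrable (B := .mul ℝ 𝔸)
    ((hf'.mul hg.continuous).integrable_of_hasCompactSupport (hsupp.fderiv_apply ℝ v).mul_right)
    ((hf.continuous.mul hg').integrable_of_hasCompactSupport hsupp.mul_right)
    ((hf.continuous.mul hg.continuous).integrable_of_hasCompactSupport hsupp.mul_right)
    (fun x _ => hf.differentiable one_ne_zero x) (fun x _ => hg.differentiable one_ne_zero x)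

section PartialDerivative

variable {d : ℕ} {u v : EuclideanSpace ℝ (Fin d) → ℂ} {x : EuclideanSpace ℝ (Fin d)}

theorem contDiff_pd {m n : WithTop ℕ∞} (hu : ContDiff ℝ n u) (hmn : m + 1 ≤ n) (i : Fin d) :
    ContDiff ℝ m (pd i u) :=
  (hu.fderiv_right hmn).clm_apply contDiff_const

theorem continuous_pd (hu : ContDiff ℝ 1 u) (i : Fin d) : Continuous (pd i u) :=
  (contDiff_pd hu (zero_add 1).le i).continuous

theorem hasCompactSupport_pd (hu : HasCompactSupport u) (i : Fin d) :
    HasCompactSupport (pd i u) :=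
  hu.fderiv_apply ℝ _

theorem pd_conj (i : Fin d) :
    pd i (fun y => conj (u y)) x = conj (pd i u x) :=
  congrArg (· (EuclideanSpace.single i (1 : ℝ))) (fderiv_star (𝕜 := ℝ) (f := u) (x := x))

theorem pd_mul (hu : DifferentiableAt ℝ u x) (hv : DifferentiableAt ℝ v x) (i : Fin d) :
    pd i (fun y => u y * v y) x = pd i u x * v x + u x * pd i v x := by
  simp only [pd, fderiv_fun_mul hu hv, add_apply, smul_apply, smul_eq_mul]
  ring

theorem pd_const_add_const_mul_ofReal {a : EuclideanSpace ℝ (Fin d) → ℝ}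
    (ha : DifferentiableAt ℝ a x) (c e : ℂ) (i : Fin d) :
    pd i (fun y => c + e * (a y : ℂ)) x =
      e * (fderiv ℝ a x (EuclideanSpace.single i (1 : ℝ)) : ℂ) := by
  have hderiv : HasFDerivAt (fun y => c + e * (a y : ℂ))
      (e • ofRealCLM.comp (fderiv ℝ a x)) x :=
    ((ofRealCLM.hasFDerivAt.comp x ha.hasFDerivAt).const_mul e).const_add c
  simp [pd, hderiv.fderiv]

end PartialDerivative

section DivGrad

variable {d : ℕ} {b u v : EuclideanSpace ℝ (Fin d) → ℂ}

/-- The operator `div(b∇u) = ∑ᵢ ∂ᵢ(b ∂ᵢu)`, in divergence form. The coefficient `b` is allowed to be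
complex so that both second-order terms of `P_h` come from a single coefficient. -/
def divGrad (b u : EuclideanSpace ℝ (Fin d) → ℂ) (x : EuclideanSpace ℝ (Fin d)) : ℂ :=
  ∑ i : Fin d, pd i (fun y => b y * pd i u y) x

theorem divGrad_eq_sum_pd_mul_pd_add_mul_lap {x : EuclideanSpace ℝ (Fin d)}
    (hb : DifferentiableAt ℝ b x) (hu : ∀ i, DifferentiableAt ℝ (pd i u) x) :
    divGrad b u x = ∑ i, pd i b x * pd i u x + b x * lap u x := by
  rw [divGrad, lap, Finset.mul_sum, ← Finset.sum_add_distrib]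
  exact Finset.sum_congr rfl fun i _ => pd_mul hb (hu i) i

theorem contDiff_mul_pd (hb : ContDiff ℝ 1 b) (hu : ContDiff ℝ 2 u) (i : Fin d) :
    ContDiff ℝ 1 (fun x => b x * pd i u x) :=
  hb.mul (contDiff_pd hu one_add_one_eq_two.le i)

theorem continuous_divGrad (hb : ContDiff ℝ 1 b) (hu : ContDiff ℝ 2 u) :
    Continuous (divGrad b u) :=
  continuous_finsetSum _ fun i _ => continuous_pd (contDiff_mul_pd hb hu i) i

theorem integral_mul_divGrad_eq_neg (hv : ContDiff ℝ 1 v) (hb : ContDiff ℝ 1 b)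
    (hu : ContDiff ℝ 2 u) (hsupp : HasCompactSupport v) :
    ∫ x, v x * divGrad b u x = -∫ x, b x * ∑ i, pd i v x * pd i u x := by
  have hflux (i : Fin d) := contDiff_mul_pd hb hu i
  have hleft (i : Fin d) : Integrable (fun x => v x * pd i (fun y => b y * pd i u y) x) :=
    (hv.continuous.mul (continuous_pd (hflux i) i)).integrable_of_hasCompactSupport
      hsupp.mul_right
  have hright (i : Fin d) : Integrable (fun x => pd i v x * (b x * pd i u x)) :=
    ((continuous_pd hv i).mul (hflux i).continuous).integrable_of_hasCompactSupport
      (hasCompactSupport_pd hsupp i).mul_right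
  calc ∫ x, v x * divGrad b u x
      = ∑ i, ∫ x, v x * pd i (fun y => b y * pd i u y) x := by
        simp only [divGrad, Finset.mul_sum]
        exact integral_finsetSum _ fun i _ => hleft i
    _ = ∑ i, -∫ x, pd i v x * (b x * pd i u x) :=
        Finset.sum_congr rfl fun i _ =>
          integral_mul_fderiv_eq_neg_of_hasCompactSupport hv (hflux i) hsupp _
    _ = -∫ x, b x * ∑ i, pd i v x * pd i u x := by
        rw [Finset.sum_neg_distrib, ← integral_finsetSum _ fun i _ => hright i]
        simp only [Finset.mul_sum, mul_left_comm]

theorem integral_conj_mul_divGrad_eq_neg (hb : ContDiff ℝ 1 b) (hu : ContDiff ℝ 2 u)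
    (hsupp : HasCompactSupport u) :
    ∫ x, conj (u x) * divGrad b u x = -∫ x, b x * ((∑ i, ‖pd i u x‖ ^ 2 : ℝ) : ℂ) := by
  have hconj : ContDiff ℝ 1 (fun x => conj (u x)) :=
    conjCLE.contDiff.comp (hu.of_le one_le_two)
  rw [integral_mul_divGrad_eq_neg hconj hb hu (hsupp.comp_left (map_zero conj))]
  simp only [pd_conj, conj_mul', ofReal_sum, ofReal_pow]

end DivGrad

section EnergyIdentity

variable {d : ℕ} {a : EuclideanSpace ℝ (Fin d) → ℝ} {u : EuclideanSpace ℝ (Fin d) → ℂ}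

/-- The complex coefficient `h² + i h a` for which `P_h u = -div((h² + i h a)∇u) - u`. -/
def kelvinVoigtCoeff (h : ℝ) (a : EuclideanSpace ℝ (Fin d) → ℝ)
    (x : EuclideanSpace ℝ (Fin d)) : ℂ :=
  (h ^ 2 : ℂ) + I * h * (a x : ℂ)

theorem contDiff_kelvinVoigtCoeff {n : WithTop ℕ∞} (ha : ContDiff ℝ n a) (h : ℝ) :
    ContDiff ℝ n (kelvinVoigtCoeff h a) :=
  contDiff_const.add (contDiff_const.mul (ofRealCLM.contDiff.comp ha))

theorem Ph_eq_neg_divGrad_sub (ha : ContDiff ℝ 1 a) (hu : ContDiff ℝ 2 u) (h : ℝ) :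
    Ph h a u = -divGrad (kelvinVoigtCoeff h a) u - u := by
  ext x
  have hgrad (i : Fin d) : pd i (kelvinVoigtCoeff h a) x =
      I * h * (fderiv ℝ a x (EuclideanSpace.single i (1 : ℝ)) : ℂ) :=
    pd_const_add_const_mul_ofReal (ha.differentiable one_ne_zero x) _ _ i
  have hdiv := divGrad_eq_sum_pd_mul_pd_add_mul_lap
    ((contDiff_kelvinVoigtCoeff ha h).differentiable one_ne_zero x)
    fun i => (contDiff_pd hu one_add_one_eq_two.le i).differentiable one_ne_zero x
  simp only [Ph, Pi.sub_apply, Pi.neg_apply, hdiv, hgrad, kelvinVoigtCoeff, mul_assoc,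
    ← Finset.mul_sum]
  ring

theorem continuous_Ph (ha : ContDiff ℝ 1 a) (hu : ContDiff ℝ 2 u) (h : ℝ) :
    Continuous (Ph h a u) := by
  rw [Ph_eq_neg_divGrad_sub ha hu]
  exact (continuous_divGrad (contDiff_kelvinVoigtCoeff ha h) hu).neg.sub hu.continuous

theorem hasCompactSupport_Ph (hsupp : HasCompactSupport u) (h : ℝ) :
    HasCompactSupport (Ph h a u) := by
  refine .intro hsupp fun x hx => ?_
  have hpd (i : Fin d) : x ∉ tsupport (pd i u) :=
    fun hmem => hx (tsupport_fderiv_apply_subset ℝ _ hmem)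
  have hpd_pd (i : Fin d) : x ∉ tsupport (pd i (pd i u)) :=
    fun hmem => hpd i (tsupport_fderiv_apply_subset ℝ _ hmem)
  simp [Ph, lap, image_eq_zero_of_notMem_tsupport hx,
    fun i => image_eq_zero_of_notMem_tsupport (hpd i),
    fun i => image_eq_zero_of_notMem_tsupport (hpd_pd i)]

theorem integrable_mul_sum_norm_pd_sq {w : EuclideanSpace ℝ (Fin d) → ℝ} (hw : Continuous w)
    (hu : ContDiff ℝ 1 u) (hsupp : HasCompactSupport u) :
    Integrable (fun x => w x * ∑ i, ‖pd i u x‖ ^ 2) := by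
  simp only [Finset.mul_sum]
  refine integrable_finsetSum _ fun i _ => Continuous.integrable_of_hasCompactSupport
    (hw.mul ((continuous_pd hu i).norm.pow 2)) (HasCompactSupport.mul_left ?_)
  exact (hasCompactSupport_pd hsupp i).comp_left (g := fun z : ℂ => ‖z‖ ^ 2) (by simp)

theorem integral_kelvinVoigtCoeff_mul_sum_norm_pd_sq (ha : Continuous a) (hu : ContDiff ℝ 1 u)
    (hsupp : HasCompactSupport u) (h : ℝ) :
    ∫ x, kelvinVoigtCoeff h a x * ((∑ i, ‖pd i u x‖ ^ 2 : ℝ) : ℂ) =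
      (h ^ 2 * ∫ x, ∑ i, ‖pd i u x‖ ^ 2 : ℝ) + (h * ∫ x, a x * ∑ i, ‖pd i u x‖ ^ 2 : ℝ) * I := by
  have hre := integrable_mul_sum_norm_pd_sq (continuous_const (y := h ^ 2)) hu hsupp
  have him := ((integrable_mul_sum_norm_pd_sq ha hu hsupp).const_mul h).ofReal.mul_const I
  rw [← integral_const_mul, ← integral_const_mul, ← integral_complex_ofReal,
    ← integral_complex_ofReal, ← integral_mul_const]
  refine (integral_congr_ae (.of_forall fun x => ?_)).trans (integral_add hre.ofReal him)
  simp only [kelvinVoigtCoeff, ofReal_mul, ofReal_pow]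
  ring

theorem integral_conj_mul_Ph (ha : ContDiff ℝ 1 a) (hu : ContDiff ℝ 2 u)
    (hsupp : HasCompactSupport u) (h : ℝ) :
    ∫ x, conj (u x) * Ph h a u x =
      (h ^ 2 * (∫ x, ∑ i, ‖pd i u x‖ ^ 2) - ∫ x, ‖u x‖ ^ 2 : ℝ) +
        (h * ∫ x, a x * ∑ i, ‖pd i u x‖ ^ 2 : ℝ) * I := by
  have hcoeff := contDiff_kelvinVoigtCoeff ha h
  have hconj : Continuous (fun x => conj (u x)) := continuous_conj.comp hu.continuous
  have hconj_supp : HasCompactSupport (fun x => conj (u x)) := hsupp.comp_left (map_zero conj)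
  have hdiv : Integrable (fun x => conj (u x) * divGrad (kelvinVoigtCoeff h a) u x) :=
    (hconj.mul (continuous_divGrad hcoeff hu)).integrable_of_hasCompactSupport hconj_supp.mul_right
  have hmass : Integrable (fun x => conj (u x) * u x) :=
    (hconj.mul hu.continuous).integrable_of_hasCompactSupport hconj_supp.mul_right
  calc ∫ x, conj (u x) * Ph h a u x
      = -(∫ x, conj (u x) * divGrad (kelvinVoigtCoeff h a) u x) - ∫ x, conj (u x) * u x := by
        simp only [Ph_eq_neg_divGrad_sub ha hu, Pi.sub_apply, Pi.neg_apply, mul_sub, mul_neg]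
        rw [← integral_neg]
        exact integral_sub hdiv.neg hmass
    _ = (∫ x, kelvinVoigtCoeff h a x * ((∑ i, ‖pd i u x‖ ^ 2 : ℝ) : ℂ)) -
          ((∫ x, ‖u x‖ ^ 2 : ℝ) : ℂ) := by
        simp only [integral_conj_mul_divGrad_eq_neg hcoeff hu hsupp, neg_neg, conj_mul',
          ← ofReal_pow, integral_complex_ofReal]
    _ = (h ^ 2 * (∫ x, ∑ i, ‖pd i u x‖ ^ 2) - ∫ x, ‖u x‖ ^ 2 : ℝ) +
          (h * ∫ x, a x * ∑ i, ‖pd i u x‖ ^ 2 : ℝ) * I := by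
        rw [integral_kelvinVoigtCoeff_mul_sum_norm_pd_sq ha.continuous (hu.of_le one_le_two) hsupp,
          ofReal_sub]
        ring

theorem norm_integral_conj_mul_Ph_le (ha : ContDiff ℝ 1 a) (hu : ContDiff ℝ 2 u)
    (hsupp : HasCompactSupport u) (h : ℝ) :
    ‖∫ x, conj (u x) * Ph h a u x‖ ≤ √(∫ x, ‖u x‖ ^ 2) * √(∫ x, ‖Ph h a u x‖ ^ 2) := by
  have hL2 : MemLp u 2 := hu.continuous.memLp_of_hasCompactSupport hsupp
  have hPh_L2 : MemLp (Ph h a u) 2 :=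
    (continuous_Ph ha hu h).memLp_of_hasCompactSupport (hasCompactSupport_Ph hsupp h)
  simpa only [Pi.star_apply, RCLike.star_def, RCLike.norm_conj] using
    norm_integral_mul_le_sqrt_mul_sqrt hL2.star hPh_L2

theorem abs_dirichletEnergy_sub_normSq_le (ha : ContDiff ℝ 1 a) (hu : ContDiff ℝ 2 u)
    (hsupp : HasCompactSupport u) (h : ℝ) :
    |h ^ 2 * (∫ x, ∑ i, ‖pd i u x‖ ^ 2) - ∫ x, ‖u x‖ ^ 2| ≤
      √(∫ x, ‖u x‖ ^ 2) * √(∫ x, ‖Ph h a u x‖ ^ 2) := by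
  refine le_trans ?_ (norm_integral_conj_mul_Ph_le ha hu hsupp h)
  simpa only [integral_conj_mul_Ph ha hu hsupp, add_re, ofReal_re, re_ofReal_mul, I_re, mul_zero,
    add_zero] using
    abs_re_le_norm (∫ x, conj (u x) * Ph h a u x)

theorem abs_mul_dampedEnergy_le (ha : ContDiff ℝ 1 a) (hu : ContDiff ℝ 2 u)
    (hsupp : HasCompactSupport u) (h : ℝ) :
    |h * ∫ x, a x * ∑ i, ‖pd i u x‖ ^ 2| ≤
      √(∫ x, ‖u x‖ ^ 2) * √(∫ x, ‖Ph h a u x‖ ^ 2) := by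
  refine le_trans ?_ (norm_integral_conj_mul_Ph_le ha hu hsupp h)
  simpa only [integral_conj_mul_Ph ha hu hsupp, add_im, ofReal_im, im_ofReal_mul, I_im, mul_one,
    zero_add] using
    abs_im_le_norm (∫ x, conj (u x) * Ph h a u x)

end EnergyIdentity

theorem stmt_5_general {ι : Type*} {l : Filter ι} {d : ℕ} {a : EuclideanSpace ℝ (Fin d) → ℝ}
    {h : ι → ℝ} {u : ι → EuclideanSpace ℝ (Fin d) → ℂ} (ha : ContDiff ℝ 1 a)
    (hu : ∀ n, ContDiff ℝ 2 (u n)) (hsupp : ∀ n, HasCompactSupport (u n))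
    (hbdd : (fun n => √(∫ x, ‖u n x‖ ^ 2)) =O[l] fun _ => (1 : ℝ))
    (hf : (fun n => √(∫ x, ‖Ph (h n) a (u n) x‖ ^ 2)) =o[l] h) :
    ((fun n => h n ^ 2 * (∫ x, ∑ i, ‖pd i (u n) x‖ ^ 2) - ∫ x, ‖u n x‖ ^ 2) =o[l] h) ∧
    ((fun n => ∫ x, a x * (h n ^ 2 * ∑ i, ‖pd i (u n) x‖ ^ 2)) =o[l] fun n => h n ^ 2) := by
  have hpairing : (fun n => √(∫ x, ‖u n x‖ ^ 2) * √(∫ x, ‖Ph (h n) a (u n) x‖ ^ 2)) =o[l] h := by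
    simpa only [one_mul] using hbdd.mul_isLittleO hf
  have hdamped : (fun n => h n * ∫ x, a x * ∑ i, ‖pd i (u n) x‖ ^ 2) =o[l] h :=
    (IsBigO.of_norm_le fun n =>
      abs_mul_dampedEnergy_le ha (hu n) (hsupp n) (h n)).trans_isLittleO hpairing
  refine ⟨(IsBigO.of_norm_le fun n =>
    abs_dirichletEnergy_sub_normSq_le ha (hu n) (hsupp n) (h n)).trans_isLittleO hpairing, ?_⟩
  refine ((isBigO_refl h l).mul_isLittleO hdamped).congr (fun n => ?_) fun n => (sq (h n)).symm
  simp only [mul_left_comm (a _), integral_const_mul, sq, mul_assoc]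

/-- **Lemma 3.1 (1)–(2) of the paper in sequence form**: for a contradiction sequence
(`h_n → 0`, `‖u_n‖_{L²} = 1`, `‖P_{h_n}u_n‖_{L²} = o(h_n)`) with damping `a` bounded,
nonnegative, `C¹` and satisfying `‖∇a‖ ≤ K a^{1/2}`:
(i) `‖h_n ∇u_n‖²_{L²} - 1 = o(h_n)`, and (ii) `∫ a ‖h_n∇u_n‖² = o(h_n²)`. -/
theorem stmt_5 (d : ℕ) (hd : 1 ≤ d)
    (a : EuclideanSpace ℝ (Fin d) → ℝ) (K : ℝ)
    (haC1 : ContDiff ℝ 1 a) (habd : ∃ C, ∀ x, a x ≤ C) (hapos : ∀ x, 0 ≤ a x)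
    (haK : ∀ x, ‖gradient a x‖ ≤ K * Real.sqrt (a x))
    (h : ℕ → ℝ) (u : ℕ → EuclideanSpace ℝ (Fin d) → ℂ)
    (hhpos : ∀ n, 0 < h n) (hh0 : Tendsto h atTop (nhds 0))
    (husm : ∀ n, ContDiff ℝ (⊤ : ℕ∞) (u n)) (husupp : ∀ n, HasCompactSupport (u n))
    (hunorm : ∀ n, (∫ x, ‖u n x‖ ^ 2) = 1)
    (hf : (fun n => Real.sqrt (∫ x, ‖Ph (h n) a (u n) x‖ ^ 2)) =o[atTop] h) :
    ((fun n => (h n) ^ 2 * (∫ x, ∑ i : Fin d, ‖pd i (u n) x‖ ^ 2) - 1) =o[atTop] h) ∧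
    ((fun n => ∫ x, a x * ((h n) ^ 2 * ∑ i : Fin d, ‖pd i (u n) x‖ ^ 2)) =o[atTop]
      (fun n => (h n) ^ 2)) := by
  simpa only [hunorm] using stmt_5_general haC1 (fun n => contDiff_infty.1 (husm n) 2) husupp
    (by simp [hunorm, isBigO_refl]) hf

end
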